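/- Let H, K be finite-dimensional Hilbert spaces, ρ a density operator on H, σ a density operator on K, V unitary on H⊗K, (Q_n)_{n∈N} mutually orthogonal projections on K summing to the identity. Define ρ₁₂ := Σ_n (1⊗Q_n) V (ρ⊗σ) V* (1⊗Q_n), ρ₁ := Tr_K ρ₁₂, ρ₂ := Tr_H ρ₁₂, and let S denote von Neumann entropy. Then S(ρ) − S(ρ₁) ≤ S(ρ₂) − S(σ). -/

import Mathlib

open Matrix Kronecker ComplexOrder

noncomputable def ptraceK {dH dK : Type*} [Fintype dK]
    (M : Matrix (dH × dK) (dH × dK) ℂ) : Matrix dH dH ℂ :=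
  Matrix.of fun a b => ∑ j, M (a, j) (b, j)

noncomputable def ptraceH {dH dK : Type*} [Fintype dH]
    (M : Matrix (dH × dK) (dH × dK) ℂ) : Matrix dK dK ℂ :=
  Matrix.of fun a b => ∑ i, M (i, a) (i, b)

def IsDensity {d : Type*} [Fintype d] (ρ : Matrix d d ℂ) : Prop :=
  ρ.PosSemidef ∧ ρ.trace = 1

open scoped Classical in
/-- Von Neumann entropy, computed from the eigenvalues of a Hermitian matrix. -/
noncomputable def vNE {d : Type*} [Fintype d] [DecidableEq d] (ρ : Matrix d d ℂ) : ℝ :=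
  if h : ρ.IsHermitian then ∑ i, Real.negMulLog (h.eigenvalues i) else 0

open Real in
/-- Subadditivity of the Shannon entropy: a joint distribution has at most the entropy of its two
marginals together. -/
lemma sum_negMulLog_le_marginals {α β : Type*} [Fintype α] [Fintype β] (p : α × β → ℝ)
    (hp : ∀ x, 0 ≤ p x) (hsum : ∑ x, p x = 1) :
    ∑ x, negMulLog (p x) ≤
      ∑ i, negMulLog (∑ j, p (i, j)) + ∑ j, negMulLog (∑ i, p (i, j)) := by
  set a : α → ℝ := fun i => ∑ j, p (i, j) with ha
  set b : β → ℝ := fun j => ∑ i, p (i, j) with hb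
  have hpa (i j) : p (i, j) ≤ a i :=
    Finset.single_le_sum (f := fun j => p (i, j)) (fun j _ => hp (i, j)) (Finset.mem_univ j)
  have hpb (i j) : p (i, j) ≤ b j :=
    Finset.single_le_sum (f := fun i => p (i, j)) (fun i _ => hp (i, j)) (Finset.mem_univ i)
  have key (i j) : negMulLog (p (i, j)) ≤
      -p (i, j) * log (a i) + -p (i, j) * log (b j) + (a i * b j - p (i, j)) := by
    rcases (hp (i, j)).eq_or_lt with h | h
    · have := mul_nonneg ((hp _).trans (hpa i j)) ((hp _).trans (hpb i j))
      simpa [← h] using this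
    · have ha0 := h.trans_le (hpa i j)
      have hb0 := h.trans_le (hpb i j)
      have := mul_le_mul_of_nonneg_left
        (log_le_sub_one_of_pos (div_pos (mul_pos ha0 hb0) h)) h.le
      rw [log_div (mul_pos ha0 hb0).ne' h.ne', log_mul ha0.ne' hb0.ne', mul_sub_one,
        mul_div_cancel₀ _ h.ne'] at this
      rw [negMulLog]
      linarith
  have hasum : ∑ i, a i = 1 := by rw [← hsum, Fintype.sum_prod_type]
  have hbsum : ∑ j, b j = 1 := by rw [← hsum, Fintype.sum_prod_type_right]
  have hpsum : ∑ i, ∑ j, p (i, j) = 1 := by rw [← hsum, Fintype.sum_prod_type]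
  calc ∑ x, negMulLog (p x) = ∑ i, ∑ j, negMulLog (p (i, j)) := Fintype.sum_prod_type _
    _ ≤ ∑ i, ∑ j, (-p (i, j) * log (a i) + -p (i, j) * log (b j) + (a i * b j - p (i, j))) :=
      Finset.sum_le_sum fun i _ => Finset.sum_le_sum fun j _ => key i j
    _ = ∑ i, ∑ j, -p (i, j) * log (a i) + ∑ j, ∑ i, -p (i, j) * log (b j) := by
      have hab : ∑ i, ∑ j, a i * b j = 1 := by simp [← Finset.sum_mul_sum, hasum, hbsum]
      rw [Finset.sum_comm (f := fun j i => -p (i, j) * log (b j))]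
      simp only [Finset.sum_add_distrib, Finset.sum_sub_distrib, hab, hpsum, sub_self, add_zero]
    _ = _ := by
      simp only [← Finset.sum_mul, Finset.sum_neg_distrib, negMulLog, ha, hb]

/-- Doubly stochastic matrices do not decrease the Shannon entropy. -/
lemma sum_negMulLog_le_mulVec {m : Type*} [Fintype m] [DecidableEq m] {D : Matrix m m ℝ}
    (hD : D ∈ doublyStochastic ℝ m) {x : m → ℝ} (hx : ∀ j, 0 ≤ x j) :
    ∑ j, Real.negMulLog (x j) ≤ ∑ i, Real.negMulLog ((D *ᵥ x) i) := by
  calc ∑ j, Real.negMulLog (x j) = ∑ i, ∑ j, D i j * Real.negMulLog (x j) := by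
        rw [Finset.sum_comm]
        simp [← Finset.sum_mul, sum_col_of_mem_doublyStochastic hD]
    _ ≤ _ := Finset.sum_le_sum fun i _ => by
        simpa [mulVec, dotProduct] using Real.concaveOn_negMulLog.le_map_sum
          (t := Finset.univ) (fun j _ => nonneg_of_mem_doublyStochastic hD)
          (sum_row_of_mem_doublyStochastic hD i) (fun j _ => Set.mem_Ici.2 (hx j))

/-- A unital trace-preserving Kraus family acts on the diagonal of diagonal matrices through a
doubly stochastic matrix. -/
lemma exists_doublyStochastic_of_kraus {m N : Type*} [Fintype m] [DecidableEq m] [Fintype N]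
    (K : N → Matrix m m ℂ) (h₁ : ∑ n, K n * (K n)ᴴ = 1) (h₂ : ∑ n, (K n)ᴴ * K n = 1) :
    ∃ D ∈ doublyStochastic ℝ m, ∀ (x : m → ℝ) (i : m),
      (∑ n, K n * diagonal (fun j => (x j : ℂ)) * (K n)ᴴ) i i = ((D *ᵥ x) i : ℂ) := by
  refine ⟨Matrix.of fun i j => ∑ n, Complex.normSq (K n i j),
    mem_doublyStochastic_iff_sum.2 ⟨fun i j => Finset.sum_nonneg fun n _ =>
      Complex.normSq_nonneg _, fun i => ?_, fun j => ?_⟩, fun x i => ?_⟩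
  · have := congrFun (congrFun h₁ i) i
    simp only [Matrix.sum_apply, mul_apply, conjTranspose_apply, RCLike.star_def, Complex.mul_conj,
      one_apply_eq] at this
    rw [Finset.sum_comm] at this
    exact_mod_cast this
  · have := congrFun (congrFun h₂ j) j
    simp only [Matrix.sum_apply, mul_apply, conjTranspose_apply, RCLike.star_def,
      ← Complex.normSq_eq_conj_mul_self, one_apply_eq] at this
    rw [Finset.sum_comm] at this
    exact_mod_cast this
  · simp only [Matrix.sum_apply, mul_apply (M := _ * diagonal _), mul_diagonal,
      conjTranspose_apply, RCLike.star_def, mulVec, dotProduct, of_apply, Complex.ofReal_sum,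
      Complex.ofReal_mul, Finset.sum_mul]
    rw [Finset.sum_comm]
    refine Finset.sum_congr rfl fun j _ => Finset.sum_congr rfl fun n _ => ?_
    rw [← Complex.mul_conj]
    ring

lemma Matrix.IsHermitian.exists_unitary_diagonal_vNE {d : Type*} [Fintype d] [DecidableEq d]
    {A : Matrix d d ℂ} (hA : A.IsHermitian) :
    ∃ (U : Matrix d d ℂ) (l : d → ℝ), Uᴴ * U = 1 ∧ U * Uᴴ = 1 ∧
      A = U * diagonal (fun i => (l i : ℂ)) * Uᴴ ∧
      vNE A = ∑ i, Real.negMulLog (l i) ∧ (A.PosSemidef → ∀ i, 0 ≤ l i) := by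
  refine ⟨hA.eigenvectorUnitary, hA.eigenvalues, Unitary.coe_star_mul_self _,
    Unitary.coe_mul_star_self _, ?_, ?_, fun h => h.eigenvalues_nonneg⟩
  · have := hA.spectral_theorem
    rwa [Unitary.conjStarAlgAut_apply] at this
  · rw [vNE, dif_pos hA]

lemma sum_eq_trace_of_eq_conj_diagonal {d : Type*} [Fintype d] [DecidableEq d]
    {A U : Matrix d d ℂ} {l : d → ℝ} (hU : Uᴴ * U = 1)
    (hA : A = U * diagonal (fun i => (l i : ℂ)) * Uᴴ) : ((∑ i, l i : ℝ) : ℂ) = A.trace := by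
  rw [hA, trace_mul_cycle, hU, one_mul, trace_diagonal, Complex.ofReal_sum]

section PartialTrace

variable {dH dK : Type*}

lemma ptraceK_isHermitian [Fintype dK] {M : Matrix (dH × dK) (dH × dK) ℂ} (hM : M.IsHermitian) :
    (ptraceK M).IsHermitian := by
  ext a b
  simp only [ptraceK, conjTranspose_apply, of_apply, star_sum]
  exact Finset.sum_congr rfl fun j _ => hM.apply _ _

lemma ptraceH_eq_ptraceK_submatrix_swap [Fintype dH] (M : Matrix (dH × dK) (dH × dK) ℂ) :
    ptraceH M = ptraceK (M.submatrix Prod.swap Prod.swap) := rfl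

lemma ptraceH_isHermitian [Fintype dH] {M : Matrix (dH × dK) (dH × dK) ℂ} (hM : M.IsHermitian) :
    (ptraceH M).IsHermitian :=
  ptraceK_isHermitian (hM.submatrix Prod.swap)

lemma ptraceK_kronecker_mul_mul [Fintype dH] [Fintype dK] [DecidableEq dK]
    (A C : Matrix dH dH ℂ) (B D : Matrix dK dK ℂ)
    (hDB : D * B = 1) (M : Matrix (dH × dK) (dH × dK) ℂ) :
    ptraceK ((A ⊗ₖ B) * M * (C ⊗ₖ D)) = A * ptraceK M * C := by
  ext i k
  have hDB' (d b : dK) : ∑ j, D d j * B j b = if d = b then 1 else 0 := by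
    rw [← mul_apply, hDB, one_apply]
  calc ptraceK ((A ⊗ₖ B) * M * (C ⊗ₖ D)) i k
      = ∑ j, ∑ c, ∑ d, ∑ a, ∑ b, A i a * M (a, b) (c, d) * C c k * (D d j * B j b) := by
        simp only [ptraceK, of_apply, mul_apply, kronecker_apply, Fintype.sum_prod_type,
          Finset.sum_mul]
        congr! 5
        ring
    _ = ∑ c, ∑ d, ∑ a, ∑ b, A i a * M (a, b) (c, d) * C c k * ∑ j, D d j * B j b := by
        simp only [Finset.mul_sum]
        rw [Finset.sum_comm]
        refine Finset.sum_congr rfl fun c _ => ?_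
        rw [Finset.sum_comm]
        refine Finset.sum_congr rfl fun d _ => ?_
        rw [Finset.sum_comm]
        refine Finset.sum_congr rfl fun a _ => ?_
        rw [Finset.sum_comm]
    _ = (A * ptraceK M * C) i k := by
        simp only [hDB', mul_ite, mul_one, mul_zero, Finset.sum_ite_eq, Finset.mem_univ, if_true,
          ptraceK, of_apply, mul_apply, Finset.mul_sum, Finset.sum_mul]
        exact Finset.sum_congr rfl fun c _ => Finset.sum_comm

lemma ptraceH_kronecker_mul_mul [Fintype dH] [Fintype dK] [DecidableEq dH]
    (A C : Matrix dH dH ℂ) (B D : Matrix dK dK ℂ)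
    (hCA : C * A = 1) (M : Matrix (dH × dK) (dH × dK) ℂ) :
    ptraceH ((A ⊗ₖ B) * M * (C ⊗ₖ D)) = B * ptraceH M * D := by
  rw [ptraceH_eq_ptraceK_submatrix_swap M, ← ptraceK_kronecker_mul_mul B D A C hCA,
    ptraceH_eq_ptraceK_submatrix_swap]
  congr 1
  ext ⟨i, j⟩ ⟨k, l⟩
  simp only [submatrix_apply, mul_apply, kronecker_apply, Prod.swap_prod_mk,
    Fintype.sum_prod_type_right (α₁ := dH), Fintype.sum_prod_type (α₁ := dK), mul_comm]

end PartialTrace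

theorem entropy_balance_conditional_action
    {dH dK N : Type*} [Fintype dH] [DecidableEq dH] [Fintype dK] [DecidableEq dK] [Fintype N]
    (ρ : Matrix dH dH ℂ) (σ : Matrix dK dK ℂ)
    (hρ : IsDensity ρ) (hσ : IsDensity σ)
    (V : Matrix (dH × dK) (dH × dK) ℂ) (hV : V * Vᴴ = 1 ∧ Vᴴ * V = 1)
    (Q : N → Matrix dK dK ℂ)
    (hQherm : ∀ n, (Q n).IsHermitian)
    (hQproj : ∀ n, Q n * Q n = Q n)
    (hQorth : ∀ n m, n ≠ m → Q n * Q m = 0)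
    (hQsum : ∑ n, Q n = 1)
    (ρ₁₂ : Matrix (dH × dK) (dH × dK) ℂ)
    (hρ₁₂ : ρ₁₂ = ∑ n, ((1 : Matrix dH dH ℂ) ⊗ₖ Q n) * (V * (ρ ⊗ₖ σ) * Vᴴ) *
        ((1 : Matrix dH dH ℂ) ⊗ₖ Q n)) :
    vNE ρ - vNE (ptraceK ρ₁₂) ≤ vNE (ptraceH ρ₁₂) - vNE σ := by
  obtain ⟨R, r, hR, hR', hρR, hSρ, hr⟩ := hρ.1.isHermitian.exists_unitary_diagonal_vNE
  obtain ⟨T, t, hT, hT', hσT, hSσ, ht⟩ := hσ.1.isHermitian.exists_unitary_diagonal_vNE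
  replace hr := hr hρ.1
  replace ht := ht hσ.1
  have hr1 : ∑ i, r i = 1 := by
    exact_mod_cast (sum_eq_trace_of_eq_conj_diagonal hR hρR).trans hρ.2
  have ht1 : ∑ i, t i = 1 := by
    exact_mod_cast (sum_eq_trace_of_eq_conj_diagonal hT hσT).trans hσ.2
  let P : N → Matrix (dH × dK) (dH × dK) ℂ := fun n => (1 : Matrix dH dH ℂ) ⊗ₖ Q n
  have hPh (n) : (P n)ᴴ = P n := by simp [P, conjTranspose_kronecker, (hQherm n).eq]
  have hPP (n) : P n * P n = P n := by simp [P, ← mul_kronecker_mul, hQproj]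
  have hPsum : ∑ n, P n = 1 := by
    rw [← one_kronecker_one, ← hQsum]
    ext ⟨i, j⟩ ⟨k, l⟩
    simp [P, Matrix.sum_apply, Finset.mul_sum]
  have hW : (R ⊗ₖ T)ᴴ * (R ⊗ₖ T) = 1 := by
    rw [conjTranspose_kronecker, ← mul_kronecker_mul, hR, hT, one_kronecker_one]
  have hW' : (R ⊗ₖ T) * (R ⊗ₖ T)ᴴ = 1 := by
    rw [conjTranspose_kronecker, ← mul_kronecker_mul, hR', hT', one_kronecker_one]
  let x : dH × dK → ℝ := fun q => r q.1 * t q.2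
  have hx : ρ ⊗ₖ σ = (R ⊗ₖ T) * diagonal (fun q => (x q : ℂ)) * (R ⊗ₖ T)ᴴ := by
    have : diagonal (fun q => (x q : ℂ)) =
        diagonal (fun i => (r i : ℂ)) ⊗ₖ diagonal (fun j => (t j : ℂ)) := by
      simp [x, diagonal_kronecker_diagonal]
    rw [this, conjTranspose_kronecker, ← mul_kronecker_mul, ← mul_kronecker_mul, ← hρR, ← hσT]
  have hx0 (q) : 0 ≤ x q := mul_nonneg (hr _) (ht _)
  have hx1 : ∑ q, x q = 1 := by
    rw [Fintype.sum_prod_type, ← Finset.sum_mul_sum, hr1, ht1, one_mul]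
  have hSx : ∑ q, Real.negMulLog (x q) = vNE ρ + vNE σ := by
    simp only [x, Real.negMulLog_mul, Finset.sum_add_distrib, Fintype.sum_prod_type]
    simp only [← Finset.sum_mul, ← Finset.mul_sum, hr1, ht1, one_mul, hSρ,
      hSσ]
  have hM : ρ₁₂.IsHermitian := by
    have hρσ : (ρ ⊗ₖ σ)ᴴ = ρ ⊗ₖ σ := by
      rw [conjTranspose_kronecker, hρ.1.isHermitian.eq, hσ.1.isHermitian.eq]
    rw [hρ₁₂, IsHermitian, conjTranspose_sum]
    refine Finset.sum_congr rfl fun n _ => ?_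
    change (P n * (V * (ρ ⊗ₖ σ) * Vᴴ) * P n)ᴴ = P n * (V * (ρ ⊗ₖ σ) * Vᴴ) * P n
    simp only [conjTranspose_mul, conjTranspose_conjTranspose, hPh, hρσ, Matrix.mul_assoc]
  obtain ⟨A, a, hA, hA', hAM, hSa, -⟩ := (ptraceK_isHermitian hM).exists_unitary_diagonal_vNE
  obtain ⟨B, b, hB, hB', hBM, hSb, -⟩ := (ptraceH_isHermitian hM).exists_unitary_diagonal_vNE
  have hX : (A ⊗ₖ B)ᴴ * (A ⊗ₖ B) = 1 := by
    rw [conjTranspose_kronecker, ← mul_kronecker_mul, hA, hB, one_kronecker_one]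
  have hX' : (A ⊗ₖ B) * (A ⊗ₖ B)ᴴ = 1 := by
    rw [conjTranspose_kronecker, ← mul_kronecker_mul, hA', hB', one_kronecker_one]
  let K : N → Matrix (dH × dK) (dH × dK) ℂ := fun n => (A ⊗ₖ B)ᴴ * P n * V * (R ⊗ₖ T)
  have hKh (n) : (K n)ᴴ = (R ⊗ₖ T)ᴴ * Vᴴ * P n * (A ⊗ₖ B) := by
    simp only [K, conjTranspose_mul, conjTranspose_conjTranspose, hPh, Matrix.mul_assoc]
  have hK₁ : ∑ n, K n * (K n)ᴴ = 1 := by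
    have h (n) : K n * (K n)ᴴ = (A ⊗ₖ B)ᴴ * P n * (A ⊗ₖ B) := by
      calc K n * (K n)ᴴ
          = (A ⊗ₖ B)ᴴ * P n * (V * ((R ⊗ₖ T) * (R ⊗ₖ T)ᴴ) * Vᴴ) * P n * (A ⊗ₖ B) := by
            rw [hKh]; simp only [K, Matrix.mul_assoc]
        _ = _ := by
          rw [hW', Matrix.mul_one, hV.1, Matrix.mul_one, Matrix.mul_assoc _ (P n) (P n), hPP]
    simp only [h]
    rw [← Finset.sum_mul, ← Finset.mul_sum, hPsum, Matrix.mul_one, hX]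
  have hK₂ : ∑ n, (K n)ᴴ * K n = 1 := by
    have h (n) : (K n)ᴴ * K n = (R ⊗ₖ T)ᴴ * Vᴴ * P n * (V * (R ⊗ₖ T)) := by
      calc (K n)ᴴ * K n
          = (R ⊗ₖ T)ᴴ * Vᴴ * (P n * ((A ⊗ₖ B) * (A ⊗ₖ B)ᴴ) * P n) * (V * (R ⊗ₖ T)) := by
            rw [hKh]; simp only [K, Matrix.mul_assoc]
        _ = _ := by rw [hX', Matrix.mul_one, hPP]
    simp only [h]
    rw [← Finset.sum_mul, ← Finset.mul_sum, hPsum, Matrix.mul_one, Matrix.mul_assoc,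
      ← Matrix.mul_assoc Vᴴ, hV.2, Matrix.one_mul, hW]
  obtain ⟨D, hD, hDx⟩ := exists_doublyStochastic_of_kraus K hK₁ hK₂
  have hdiag (q) : ((A ⊗ₖ B)ᴴ * ρ₁₂ * (A ⊗ₖ B)) q q = ((D *ᵥ x) q : ℂ) := by
    rw [← hDx, hρ₁₂, hx, Finset.mul_sum, Finset.sum_mul]
    simp only [hKh]
    simp only [K, P, Matrix.mul_assoc]
  have hp0 (q) : 0 ≤ (D *ᵥ x) q :=
    Finset.sum_nonneg fun j _ => mul_nonneg (nonneg_of_mem_doublyStochastic hD) (hx0 j)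
  have hp1 : ∑ q, (D *ᵥ x) q = 1 := by
    simp only [mulVec, dotProduct]
    rw [Finset.sum_comm]
    simp only [← Finset.sum_mul, sum_col_of_mem_doublyStochastic hD, one_mul, hx1]
  have ha (i) : ∑ j, (D *ᵥ x) (i, j) = a i := by
    have h : ptraceK ((A ⊗ₖ B)ᴴ * ρ₁₂ * (A ⊗ₖ B)) = diagonal (fun i => (a i : ℂ)) := by
      rw [conjTranspose_kronecker, ptraceK_kronecker_mul_mul _ _ _ _ hB', hAM]
      simp only [Matrix.mul_assoc, hA, Matrix.mul_one]
      rw [← Matrix.mul_assoc, hA, Matrix.one_mul]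
    have := congrFun (congrFun h i) i
    simp only [ptraceK, of_apply, hdiag, diagonal_apply_eq] at this
    exact_mod_cast this
  have hb (j) : ∑ i, (D *ᵥ x) (i, j) = b j := by
    have h : ptraceH ((A ⊗ₖ B)ᴴ * ρ₁₂ * (A ⊗ₖ B)) = diagonal (fun j => (b j : ℂ)) := by
      rw [conjTranspose_kronecker, ptraceH_kronecker_mul_mul _ _ _ _ hA', hBM]
      simp only [Matrix.mul_assoc, hB, Matrix.mul_one]
      rw [← Matrix.mul_assoc, hB, Matrix.one_mul]
    have := congrFun (congrFun h j) j
    simp only [ptraceH, of_apply, hdiag, diagonal_apply_eq] at this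
    exact_mod_cast this
  have h₁ := sum_negMulLog_le_mulVec hD hx0
  have h₂ := sum_negMulLog_le_marginals (D *ᵥ x) hp0 hp1
  simp only [ha, hb] at h₂
  rw [hSx] at h₁
  rw [hSa, hSb]
  linarith
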